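/- arXiv:2503.21390 — 2 statements merged into one kernel-verified Lean document; each statement's English description precedes it below -/
import Mathlib

section
/- Let F be a formal group law over a commutative ring R with inverse ι. Then p_F(z) := F^{0,1}(z,0)^{-1} ∈ R⟦z⟧ is the unique power series p with p(0) = 1 satisfying the invariance identities p(F(z,w))·F^{1,0}(z,w) = p(z) and p(F(z,w))·F^{0,1}(z,w) = p(w) in R⟦z,w⟧. Moreover, p_F(ι(z))·ι'(z) = −p_F(z) in R⟦z⟧, where ι' is the formal derivative of ι and p_F(ι(z)) denotes composition of p_F with ι. -/
/-!
Coefficient-wise formal calculus for vertex `F`-algebras, following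
M. Upmeier, "Vertex F-Algebras and Their Associated Lie Algebra".

Series in one, two or three variables are represented by their coefficient
functions `ℤ → R`, `ℤ → ℤ → R`, …; products are given by coefficient-wise
(finite) sums, expressed via `finsum` (`∑ᶠ`).
-/

open scoped BigOperators

noncomputable section

/-- Generalized binomial coefficient `C(n,k) = n(n-1)⋯(n-k+1)/k!` for `n : ℤ`, `k : ℕ`. -/
def zbinom (n : ℤ) (k : ℕ) : ℤ :=
  if 0 ≤ n then (n.toNat.choose k : ℤ)
  else (-1 : ℤ) ^ k * (((k : ℤ) - n - 1).toNat.choose k : ℤ)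

/-- `C(n,m)` for integer `m`, with `C(n,m) = 0` for `m < 0`. -/
def zbinomZ (n m : ℤ) : ℤ := if m < 0 then 0 else zbinom n m.toNat

/-- `(-1)^n` for `n : ℤ`. -/
def msign (n : ℤ) : ℤ := if Even n then 1 else -1

section Series

variable {R : Type*} [CommRing R] {M : Type*} [AddCommGroup M] [Module R M]

/-- Product of a one-variable series with `R`-coefficients with an `M`-valued one. -/
def mulS (f : ℤ → R) (g : ℤ → M) : ℤ → M := fun n => ∑ᶠ i : ℤ, f i • g (n - i)

/-- The constant series `1` (one variable). -/
def oneS (R : Type*) [CommRing R] : ℤ → R := fun n => if n = 0 then 1 else 0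

/-- Natural powers of a one-variable series. -/
def pow1 (f : ℤ → R) : ℕ → ℤ → R
  | 0 => oneS R
  | k + 1 => mulS f (pow1 f k)

/-- Product of two-variable series. -/
def mulS2 (f : ℤ → ℤ → R) (g : ℤ → ℤ → M) : ℤ → ℤ → M :=
  fun a b => ∑ᶠ p : ℤ × ℤ, f p.1 p.2 • g (a - p.1) (b - p.2)

/-- The constant series `1` (two variables). -/
def oneS2 (R : Type*) [CommRing R] : ℤ → ℤ → R := fun a b => if a = 0 ∧ b = 0 then 1 else 0

/-- Natural powers of a two-variable series. -/
def pow2 (f : ℤ → ℤ → R) : ℕ → ℤ → ℤ → R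
  | 0 => oneS2 R
  | k + 1 => mulS2 f (pow2 f k)

/-- `f ∈ M((z))`: only finitely many negative powers. -/
def IsLaurent (f : ℤ → M) : Prop := ∃ N : ℤ, ∀ n : ℤ, n < N → f n = 0

/-- `f ∈ M((z,w))`: only finitely many nonzero coefficients with some negative index. -/
def IsLaurent2 (f : ℤ → ℤ → M) : Prop :=
  {p : ℤ × ℤ | (p.1 < 0 ∨ p.2 < 0) ∧ f p.1 p.2 ≠ 0}.Finite

/-- Formal derivative of a one-variable series. -/
def fderiv1 (f : ℤ → R) : ℤ → R := fun n => ((n + 1 : ℤ) : R) * f (n + 1)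

/-- The polynomial `z - w` as a two-variable series. -/
def zmw (R : Type*) [CommRing R] : ℤ → ℤ → R :=
  fun i j => if i = 1 ∧ j = 0 then 1 else if i = 0 ∧ j = 1 then -1 else 0

/-- `∂/∂w` of a two-variable series. -/
def d01 (f : ℤ → ℤ → R) : ℤ → ℤ → R := fun i j => ((j + 1 : ℤ) : R) * f i (j + 1)

/-- `∂/∂z` of a two-variable series. -/
def d10 (f : ℤ → ℤ → R) : ℤ → ℤ → R := fun i j => ((i + 1 : ℤ) : R) * f (i + 1) j

/-- Substitution `p(f(z,w))` of a two-variable series (zero constant term) into a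
one-variable power series `p`. -/
def comp2 (p : ℤ → R) (f : ℤ → ℤ → R) : ℤ → ℤ → R :=
  fun a b => ∑ᶠ m : ℕ, p (m : ℤ) * pow2 f m a b

/-- Substitution `p(f(z))` of a one-variable series (zero constant term) into a
one-variable power series `p`. -/
def comp1 (p : ℤ → R) (f : ℤ → R) : ℤ → R :=
  fun a => ∑ᶠ m : ℕ, p (m : ℤ) * pow1 f m a

/-- `(G - z)/z` for `G ≡ z (mod w)`. -/
def hzS (G : ℤ → ℤ → R) : ℤ → ℤ → R := fun i j => G (i + 1) j - oneS2 R i j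

/-- Integer powers `i_{z,w} G^n`, for `G ≡ z (mod w)`, expanded in `R((z))⟦w⟧`:
the Newton expansion `z^n ∑_k C(n,k) ((G-z)/z)^k`. -/
def izwPow (G : ℤ → ℤ → R) (n : ℤ) : ℤ → ℤ → R :=
  fun a b => ∑ᶠ k : ℕ, (zbinom n k : R) * pow2 (hzS G) k (a - n) b

/-- `(G - w)/w` for `G ≡ w (mod z)`. -/
def hwS (G : ℤ → ℤ → R) : ℤ → ℤ → R := fun i j => G i (j + 1) - oneS2 R i j

/-- Integer powers `i_{w,z} G^n`, for `G ≡ w (mod z)`, expanded in `R((w))⟦z⟧`. -/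
def iwzPow (G : ℤ → ℤ → R) (n : ℤ) : ℤ → ℤ → R :=
  fun a b => ∑ᶠ k : ℕ, (zbinom n k : R) * pow2 (hwS G) k a (b - n)

/-- `(G + w)/(-w)` for `G ≡ ι(w) (mod z)`. -/
def hwNegS (G : ℤ → ℤ → R) : ℤ → ℤ → R := fun i j => -G i (j + 1) - oneS2 R i j

/-- Integer powers `i_{w,z} G^n`, for `G ≡ -w(1+⋯) (mod z)` (e.g. `G = F(z, ι w)`),
expanded in `R((w))⟦z⟧`. -/
def iwzPowNeg (G : ℤ → ℤ → R) (n : ℤ) : ℤ → ℤ → R :=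
  fun a b => (msign n : R) * ∑ᶠ k : ℕ, (zbinom n k : R) * pow2 (hwNegS G) k a (b - n)

/-- `(f + z)/(-z)` for a series `f = -z(1 + ⋯)` such as `ι(z)`. -/
def hS (f : ℤ → R) : ℤ → R := fun j => -f (j + 1) - oneS R j

/-- Integer powers `f(z)^n` (`n : ℤ`) for `f = -z(1+⋯)`, e.g. `f = ι(z)`. -/
def iotaPow (f : ℤ → R) (n : ℤ) : ℤ → R :=
  fun a => (msign n : R) * ∑ᶠ k : ℕ, (zbinom n k : R) * pow1 (hS f) k (a - n)

/-- `f - 1` for a power series with constant term `1`. -/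
def hOneS (f : ℤ → R) : ℤ → R := fun j => f j - oneS R j

/-- Multiplicative inverse of a power series with constant term `1`. -/
def invOne (f : ℤ → R) : ℤ → R :=
  fun a => ∑ᶠ k : ℕ, ((-1 : R) ^ k) * pow1 (hOneS f) k a

end Series

/-- A (one-dimensional, commutative) formal group law `F(z,w)` over `R`, together with
its (unique) inverse `ι`. -/
structure FormalGroupLaw (R : Type*) [CommRing R] where
  F : ℤ → ℤ → R
  F_supp : ∀ i j : ℤ, i < 0 ∨ j < 0 → F i j = 0
  /-- `F(z,0) = z`, so that `F(z,w) = z + w + O(zw)` using commutativity. -/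
  F_modw : ∀ i : ℤ, F i 0 = if i = 1 then 1 else 0
  F_comm : ∀ i j : ℤ, F i j = F j i
  /-- associativity `F(F(z,w),v) = F(z,F(w,v))`, coefficient-wise. -/
  F_assoc : ∀ a b c : ℤ,
    (∑ᶠ m : ℕ, F (m : ℤ) c * pow2 F m a b) = ∑ᶠ n : ℕ, F a (n : ℤ) * pow2 F n b c
  /-- the inverse `ι(z) = -z + O(z²)`. -/
  inv : ℤ → R
  inv_supp : ∀ n : ℤ, n < 1 → inv n = 0
  inv_one : inv 1 = -1
  /-- `F(z, ι(z)) = 0`, coefficient-wise. -/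
  inv_eq : ∀ n : ℤ, (∑ᶠ p : ℤ × ℕ, F p.1 (p.2 : ℤ) * pow1 inv p.2 (n - p.1)) = 0

namespace FormalGroupLaw

variable {R : Type*} [CommRing R] {M : Type*} [AddCommGroup M] [Module R M]

/-- The series `F(z, ι(w))`. -/
def Fzi (𝓕 : FormalGroupLaw R) : ℤ → ℤ → R :=
  fun i j => ∑ᶠ m : ℕ, 𝓕.F i (m : ℤ) * pow1 𝓕.inv m j

/-- The `F`-delta distribution `z⁻¹δ_F(w/z) = i_{z,w}F(z,ιw)⁻¹ - i_{w,z}F(z,ιw)⁻¹`. -/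
def delta (𝓕 : FormalGroupLaw R) : ℤ → ℤ → R :=
  fun a b => izwPow 𝓕.Fzi (-1) a b - iwzPowNeg 𝓕.Fzi (-1) a b

/-- `p_F(z) = F^{0,1}(z,0)⁻¹`, the coefficient series of the invariant 1-form. -/
def pF (𝓕 : FormalGroupLaw R) : ℤ → R := invOne (fun i => 𝓕.F i 1)

/-- `F`-residue: the coefficient of `z⁻¹` in `f(z)·p_F(z)`. -/
def resF (𝓕 : FormalGroupLaw R) (f : ℤ → M) : M := ∑ᶠ i : ℤ, 𝓕.pF i • f (-1 - i)

/-- The `F`-hyperderivative `𝒮^F_n f`, defined by `i_{z,w}f(F(z,w)) = ∑_n (𝒮^F_n f)(z) wⁿ`. -/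
def hyper (𝓕 : FormalGroupLaw R) (n : ℕ) (f : ℤ → R) : ℤ → R :=
  fun a => ∑ᶠ m : ℤ, f m * izwPow 𝓕.F m a (n : ℤ)

/-- `F`-binomial coefficients: `i_{z,w}F(z,w)^n = ∑_{i,j} binomF(n;i,j) z^i w^j`. -/
def binomF (𝓕 : FormalGroupLaw R) (n i j : ℤ) : R := izwPow 𝓕.F n i j

/-- `φ` is a logarithm of `F`: `φ(F(z,w)) = φ(z) + φ(w)`, `φ(0) = 0`, `φ'(0) = 1`. -/
def IsLogarithm (𝓕 : FormalGroupLaw R) (φ : ℤ → R) : Prop :=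
  (∀ n : ℤ, n < 0 → φ n = 0) ∧ φ 0 = 0 ∧ φ 1 = 1 ∧
  ∀ a b : ℤ, (∑ᶠ m : ℕ, φ (m : ℤ) * pow2 𝓕.F m a b)
    = (if b = 0 then φ a else 0) + (if a = 0 then φ b else 0)

end FormalGroupLaw

section Vertex

variable {R : Type*} [CommRing R] {V : Type*} [AddCommGroup V] [Module R V]

/-- For `c = ∑_m c_m v^m ∈ V((v))`, the substitution `v ↦ F(z,w)` (coefficient `(k,n)` of
`z^k w^n`, expanded in `V((z))⟦w⟧`). -/
def substF (𝓕 : FormalGroupLaw R) (c : ℤ → V) : ℤ → ℤ → V :=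
  fun k n => ∑ᶠ m : ℤ, izwPow 𝓕.F m k n • c m

/-- Coefficients of `i_{z,w} Y(a, F(z,w)) (Y(b,w)c)`, where `Ya v = Y(a,·)v` and
`d = Y(b,·)c`. -/
def substFProd (𝓕 : FormalGroupLaw R) (Ya : V → ℤ → V) (d : ℤ → V) : ℤ → ℤ → V :=
  fun k n => ∑ᶠ q : ℤ × ℤ, izwPow 𝓕.F q.1 k (n - q.2) • Ya (d q.2) q.1

end Vertex

/-- A vertex `F`-algebra `(V, 𝟙, 𝒮, Y)` over the formal group law `𝓕`.
`Y a b : ℤ → V` records the coefficients of `Y(a,z)b = ∑_k (Y a b k) z^k`, and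
`S n` is the component `𝒮⁽ⁿ⁾` of the `F`-shift operator `𝒮(z) = ∑_{n≥0} 𝒮⁽ⁿ⁾ zⁿ`. -/
structure VertexFAlgebra (R : Type*) [CommRing R] (𝓕 : FormalGroupLaw R)
    (V : Type*) [AddCommGroup V] [Module R V] where
  vac : V
  S : ℕ → V →ₗ[R] V
  Y : V →ₗ[R] V →ₗ[R] (ℤ → V)
  /-- `Y(a,z)b ∈ V((z))`. -/
  Y_laurent : ∀ a b : V, IsLaurent (Y a b)
  /-- `Y(a,z)𝟙` is holomorphic. -/
  vac_holo : ∀ (a : V) (k : ℤ), k < 0 → Y a vac k = 0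
  /-- `Y(a,z)𝟙|_{z=0} = a`. -/
  creation : ∀ a : V, Y a vac 0 = a
  /-- `Y(𝟙,z) = id`. -/
  Y_vac : ∀ (b : V) (k : ℤ), Y vac b k = if k = 0 then b else 0
  /-- `𝒮(0) = id`. -/
  S_zero : S 0 = LinearMap.id
  /-- `𝒮(z)𝟙 = 𝟙`. -/
  S_vac : ∀ n : ℕ, 1 ≤ n → S n vac = 0
  /-- `𝒮(z) ∘ 𝒮(w) = 𝒮(F(z,w))`, coefficient-wise. -/
  S_comp : ∀ (a : V) (i j : ℕ),
    S i (S j a) = ∑ᶠ m : ℕ, pow2 𝓕.F m (i : ℤ) (j : ℤ) • S m a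
  /-- `F`-translation covariance `Y(𝒮(w)a, z)b = i_{z,w} Y(a,F(z,w))b`. -/
  translation : ∀ (a b : V) (k : ℤ) (n : ℕ),
    Y (S n a) b k = substF 𝓕 (Y a b) k (n : ℤ)
  /-- weak `F`-associativity. -/
  weak_assoc : ∀ a b c : V, ∃ N : ℕ,
    mulS2 (pow2 𝓕.F N) (fun k l => Y (Y a b k) c l)
      = mulS2 (pow2 𝓕.F N) (substFProd 𝓕 (fun v => Y a v) (Y b c))
  /-- skew symmetry `Y(a,z)b = 𝒮(z)(Y(b,ι(z))a)`, coefficient-wise. -/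
  skew : ∀ (a b : V) (k : ℤ),
    Y a b k = ∑ᶠ q : ℕ × ℤ, iotaPow 𝓕.inv q.2 (k - (q.1 : ℤ)) • S q.1 (Y b a q.2)

end

/-!
Differentiating `F(F(z,w),v) = F(z,F(w,v))` in `v` and setting `v = 0` gives
`F^{0,1}(F(z,w),0) = F^{0,1}(z,w)·F^{0,1}(w,0)`, which is the invariance of
`p_F(z) = F^{0,1}(z,0)⁻¹` in `w`; commutativity exchanges the variables. Conversely, setting `w = 0`
in `p(F(z,w))·F^{0,1}(z,w) = p(w)` gives `p(z)·F^{0,1}(z,0) = p(0)`. Finally, at `w = ι(z)` the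
invariance identities read `F^{1,0}(z,ι(z)) = p_F(z)` and `F^{0,1}(z,ι(z)) = p_F(ι(z))`, so the
chain rule applied to `F(z,ι(z)) = 0` gives `p_F(z) + p_F(ι(z))·ι'(z) = 0`.

All of this takes place in Mathlib's rings of formal power series. Coefficient functions on `ℤ` and
`ℤ × ℤ` that vanish at negative indices are the coefficients of the Hahn series attached to power
series, and `mulS`, `comp1`, `d10`, … are the images of the operations on power series.
-/

namespace FormalCalculus

open MvPowerSeries
open scoped PowerSeries

section Substitution

variable {R : Type*} [CommRing R] {σ τ : Type*}

theorem derivation_aeval [Fintype σ] {A M : Type*} [CommRing A] [Algebra R A] [AddCommGroup M]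
    [Module R M] [Module A M] (D : Derivation R A M) (a : σ → A)
    (p : MvPolynomial σ R) :
    D (p.aeval a) = ∑ s, (p.pderiv s).aeval a • D (a s) := by
  classical
  induction p using MvPolynomial.induction_on with
  | C c => simp
  | add p q hp hq => simp only [map_add, hp, hq, add_smul, Finset.sum_add_distrib]
  | mul_X p s hp =>
    simp only [map_mul, MvPolynomial.aeval_X, Derivation.leibniz, MvPolynomial.pderiv_X,
      smul_eq_mul, hp, map_add, add_smul, Finset.sum_add_distrib, mul_smul, Finset.smul_sum]
    simp [Pi.single_apply]

open scoped WithPiTopology in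
theorem continuous_pderiv [TopologicalSpace R] [IsTopologicalSemiring R] (i : σ) :
    Continuous (pderiv R i) := by
  refine continuous_pi fun d => ?_
  change Continuous fun f => coeff d (pderiv R i f)
  simp only [coeff_pderiv]
  exact (WithPiTopology.continuous_coeff R _).mul continuous_const

open scoped WithPiTopology in
theorem pderiv_subst [Fintype σ] {a : σ → MvPowerSeries τ R} (ha : HasSubst a) (t : τ)
    (f : MvPowerSeries σ R) :
    pderiv R t (f.subst a) = ∑ s, (pderiv R s f).subst a * pderiv R t (a s) := by
  let : UniformSpace R := ⊥
  have hsubst : Continuous (subst a : MvPowerSeries σ R → MvPowerSeries τ R) :=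
    continuous_subst ha
  refine congrFun (WithPiTopology.denseRange_toMvPowerSeries.equalizer
    ((continuous_pderiv t).comp hsubst)
    (continuous_finsetSum _ fun s _ => (hsubst.comp (continuous_pderiv s)).mul continuous_const)
    (funext fun p => ?_)) f
  simpa [pderiv_coe, subst_coe] using derivation_aeval (pderiv R t) a p

theorem hasSubst_pair {u v : MvPowerSeries τ R} (hu : PowerSeries.HasSubst u)
    (hv : PowerSeries.HasSubst v) : HasSubst ![u, v] :=
  hasSubst_of_constantCoeff_nilpotent (Fin.forall_fin_two.mpr ⟨hu, hv⟩)

theorem pderiv_subst_pair {u v : MvPowerSeries τ R} (hu : PowerSeries.HasSubst u)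
    (hv : PowerSeries.HasSubst v) (t : τ) (f : MvPowerSeries (Fin 2) R) :
    pderiv R t (f.subst ![u, v]) =
      (pderiv R 0 f).subst ![u, v] * pderiv R t u +
        (pderiv R 1 f).subst ![u, v] * pderiv R t v := by
  simp [pderiv_subst (hasSubst_pair hu hv)]

theorem derivative_subst_pair {u v : R⟦X⟧} (hu : PowerSeries.HasSubst u)
    (hv : PowerSeries.HasSubst v) (f : MvPowerSeries (Fin 2) R) :
    d⁄dX R (f.subst ![u, v] : R⟦X⟧) =
      (pderiv R 0 f).subst ![u, v] * d⁄dX R u + (pderiv R 1 f).subst ![u, v] * d⁄dX R v :=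
  pderiv_subst_pair hu hv () f

theorem subst_subst_pair {ρ : Type*} {u v : MvPowerSeries τ R} (hu : PowerSeries.HasSubst u)
    (hv : PowerSeries.HasSubst v) {b : τ → MvPowerSeries ρ R} (hb : HasSubst b)
    (f : MvPowerSeries (Fin 2) R) :
    (f.subst ![u, v]).subst b = f.subst ![u.subst b, v.subst b] := by
  rw [subst_comp_subst_apply (hasSubst_pair hu hv) hb]
  congr 1
  funext i
  fin_cases i <;> rfl

theorem subst_subst_powerSeries {ρ : Type*} {u : MvPowerSeries τ R} (hu : PowerSeries.HasSubst u)
    {b : τ → MvPowerSeries ρ R} (hb : HasSubst b) (p : R⟦X⟧) :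
    (p.subst u).subst b = p.subst (u.subst b) :=
  subst_comp_subst_apply hu.const hb p

theorem subst_X_zero_X_one (f : MvPowerSeries (Fin 2) R) : f.subst ![X 0, X 1] = f := by
  have : ![X 0, X 1] = (X : Fin 2 → MvPowerSeries (Fin 2) R) := by
    funext i
    fin_cases i <;> rfl
  rw [this, subst_self, id]

theorem coeff_subst_X_zero (f : MvPowerSeries (Fin 2) R) (n : ℕ) :
    PowerSeries.coeff n (f.subst ![(PowerSeries.X : R⟦X⟧), 0]) = f.coeff (Finsupp.single 0 n) := by
  rw [PowerSeries.coeff, coeff_subst (hasSubst_pair .X' .zero'), finsum_eq_single _ (.single 0 n)]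
  · simp
  · intro e he
    by_cases h₁ : e 1 = 0
    · have h₀ : n ≠ e 0 := fun h => he (by ext i; fin_cases i <;> simp [h, h₁])
      rw [← PowerSeries.coeff]
      simp [Finsupp.prod_fintype, h₁, PowerSeries.coeff_X_pow, h₀]
    · simp [Finsupp.prod_fintype, h₁]

end Substitution

section InvariantDifferential

variable {R : Type*} [CommRing R] (F : FormalGroup R)

theorem hasSubst_toPowerSeries : PowerSeries.HasSubst F.toPowerSeries :=
  .of_constantCoeff_zero F.zero_constantCoeff

theorem hasSubst_add {σ : Type*} {u v : MvPowerSeries σ R} (hu : PowerSeries.HasSubst u)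
    (hv : PowerSeries.HasSubst v) : PowerSeries.HasSubst (F.toPowerSeries.subst ![u, v]) :=
  IsNilpotent_subst (hasSubst_pair hu hv) (by simp [F.zero_constantCoeff])

/-- The power series `F^{0,1}(z, 0)`. -/
noncomputable def translationDerivative : R⟦X⟧ :=
  (pderiv R 1 F.toPowerSeries).subst ![(PowerSeries.X : R⟦X⟧), 0]

/-- The coefficient `p` of the invariant differential `p(z) dz`, normalised by `p(0) = 1`. -/
noncomputable def invariantDifferential : R⟦X⟧ :=
  (translationDerivative F).invOfUnit 1

theorem subst_translationDerivative {σ : Type*} {u : MvPowerSeries σ R}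
    (hu : PowerSeries.HasSubst u) :
    (translationDerivative F).subst u = (pderiv R 1 F.toPowerSeries).subst ![u, 0] := by
  unfold translationDerivative
  rw [PowerSeries.subst, subst_subst_pair .X' .zero' hu.const, ← PowerSeries.subst_def,
    PowerSeries.subst_X hu, ← PowerSeries.subst_def, ← PowerSeries.coe_substAlgHom hu, map_zero]

theorem coeff_translationDerivative (n : ℕ) :
    (translationDerivative F).coeff n =
      F.toPowerSeries.coeff (Finsupp.single 0 n + Finsupp.single 1 1) := by
  rw [translationDerivative, coeff_subst_X_zero, coeff_pderiv]
  simp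

theorem constantCoeff_translationDerivative :
    (translationDerivative F).constantCoeff = 1 := by
  rw [← PowerSeries.coeff_zero_eq_constantCoeff_apply, coeff_translationDerivative]
  simpa using F.lin_coeff_Y

theorem translationDerivative_mul_invariantDifferential :
    translationDerivative F * invariantDifferential F = 1 :=
  PowerSeries.mul_invOfUnit _ 1 (constantCoeff_translationDerivative F)

theorem constantCoeff_invariantDifferential : (invariantDifferential F).constantCoeff = 1 := by
  simp [invariantDifferential]

theorem pderiv_assoc :
    (pderiv R 1 F.toPowerSeries).subst
        ![F.toPowerSeries.subst ![X (0 : Fin 3), X 1], X (R := R) 2] =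
      (pderiv R 1 F.toPowerSeries).subst
          ![X (R := R) (0 : Fin 3), F.toPowerSeries.subst ![X 1, X 2]] *
        (pderiv R 1 F.toPowerSeries).subst ![X (R := R) (1 : Fin 3), X 2] := by
  have hX (i : Fin 3) : PowerSeries.HasSubst (X i : MvPowerSeries (Fin 3) R) := .X i
  have h := congrArg (pderiv R 2) F.assoc
  rw [pderiv_subst_pair (hasSubst_add F (hX 0) (hX 1)) (hX 2), pderiv_subst_pair (hX 0) (hX 1),
    pderiv_subst_pair (hX 0) (hasSubst_add F (hX 1) (hX 2)),
    pderiv_subst_pair (hX 1) (hX 2)] at h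
  simpa [pderiv_X] using h

theorem translationDerivative_subst_add :
    (translationDerivative F).subst F.toPowerSeries =
      pderiv R 1 F.toPowerSeries * (translationDerivative F).subst (X (1 : Fin 2)) := by
  have hX (i : Fin 3) : PowerSeries.HasSubst (X i : MvPowerSeries (Fin 3) R) := .X i
  have hv₀ : HasSubst ![X (R := R) (0 : Fin 2), X 1, 0] :=
    hasSubst_of_constantCoeff_zero (by simp [Fin.forall_fin_succ])
  have h := congrArg (subst ![X (R := R) (0 : Fin 2), X 1, 0]) (pderiv_assoc F)
  simp only [subst_mul hv₀, subst_subst_pair (hasSubst_add F (hX 0) (hX 1)) (hX 2) hv₀,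
    subst_subst_pair (hX 0) (hasSubst_add F (hX 1) (hX 2)) hv₀,
    subst_subst_pair (hX _) (hX _) hv₀, subst_X hv₀] at h
  have hX₁ : PowerSeries.HasSubst (X 1 : MvPowerSeries (Fin 2) R) := .X 1
  rw [subst_translationDerivative F (hasSubst_toPowerSeries F), subst_translationDerivative F hX₁]
  simpa [F.add_zero hX₁, subst_X_zero_X_one] using h

theorem invariantDifferential_subst_add_mul_pderiv_one :
    (invariantDifferential F).subst F.toPowerSeries * pderiv R 1 F.toPowerSeries =
      (invariantDifferential F).subst (X (1 : Fin 2)) := by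
  have hF := hasSubst_toPowerSeries F
  have hX : PowerSeries.HasSubst (X 1 : MvPowerSeries (Fin 2) R) := .X 1
  have subst_mul_eq_one {u : MvPowerSeries (Fin 2) R} (hu : PowerSeries.HasSubst u) :
      (translationDerivative F).subst u * (invariantDifferential F).subst u = 1 := by
    rw [← PowerSeries.subst_mul hu, translationDerivative_mul_invariantDifferential,
      ← PowerSeries.coe_substAlgHom hu, map_one]
  set p := invariantDifferential F
  set Fw := pderiv R 1 F.toPowerSeries
  calc p.subst F.toPowerSeries * Fw
      = p.subst F.toPowerSeries * (Fw * (translationDerivative F).subst (X (1 : Fin 2))) *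
          p.subst (X (1 : Fin 2)) := by
        linear_combination -p.subst F.toPowerSeries * Fw * subst_mul_eq_one hX
    _ = p.subst (X (1 : Fin 2)) := by
        rw [← translationDerivative_subst_add]
        linear_combination p.subst (X (1 : Fin 2)) * subst_mul_eq_one hF

theorem invariantDifferential_subst_add_mul_pderiv_zero [F.IsComm] :
    (invariantDifferential F).subst F.toPowerSeries * pderiv R 0 F.toPowerSeries =
      (invariantDifferential F).subst (X (0 : Fin 2)) := by
  have hX (i : Fin 2) : PowerSeries.HasSubst (X i : MvPowerSeries (Fin 2) R) := .X i
  have hswap := hasSubst_pair (hX 1) (hX 0)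
  have hcomm : F.toPowerSeries.subst ![X (1 : Fin 2), X 0] =
    F.toPowerSeries := (FormalGroup.IsComm.comm).symm
  have hderiv : (pderiv R 1 F.toPowerSeries).subst ![X (1 : Fin 2), X 0] =
      pderiv R 0 F.toPowerSeries := by
    nth_rw 2 [← hcomm]
    simp [pderiv_subst_pair (hX 1) (hX 0)]
  have h := congrArg (subst ![X (R := R) (1 : Fin 2), X 0])
    (invariantDifferential_subst_add_mul_pderiv_one F)
  rwa [subst_mul hswap, subst_subst_powerSeries (hasSubst_toPowerSeries F) hswap,
    subst_subst_powerSeries (hX 1) hswap, hcomm, hderiv, subst_X hswap] at h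

theorem eq_C_mul_invariantDifferential {p : R⟦X⟧}
    (hp : p.subst F.toPowerSeries * pderiv R 1 F.toPowerSeries = p.subst (X (1 : Fin 2))) :
    p = PowerSeries.C p.constantCoeff * invariantDifferential F := by
  have hs : HasSubst ![(PowerSeries.X : R⟦X⟧), 0] := hasSubst_pair .X' .zero'
  have h := congrArg (subst ![(PowerSeries.X : R⟦X⟧), 0]) hp
  rw [subst_mul hs, subst_subst_powerSeries (hasSubst_toPowerSeries F) hs,
    subst_subst_powerSeries (.X 1) hs, F.add_zero .X', subst_X hs] at h
  have h : p * translationDerivative F = PowerSeries.C p.constantCoeff := by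
    rw [PowerSeries.X_subst] at h
    exact h.trans PowerSeries.subst_zero_eq_C_constantCoeff
  linear_combination invariantDifferential F * h -
    p * translationDerivative_mul_invariantDifferential F

theorem invariantDifferential_subst_mul_derivative [F.IsComm] {i : R⟦X⟧}
    (hi : PowerSeries.HasSubst i) (h : F.toPowerSeries.subst ![(PowerSeries.X : R⟦X⟧), i] = 0) :
    (invariantDifferential F).subst i * i.derivative R = -invariantDifferential F := by
  have hs : HasSubst ![(PowerSeries.X : R⟦X⟧), i] := hasSubst_pair .X' hi
  have pderiv_eq {j : Fin 2} (hj : (invariantDifferential F).subst F.toPowerSeries *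
      pderiv R j F.toPowerSeries = (invariantDifferential F).subst (X j)) :
      (pderiv R j F.toPowerSeries).subst ![(PowerSeries.X : R⟦X⟧), i] =
        (invariantDifferential F).subst (![(PowerSeries.X : R⟦X⟧), i] j) := by
    have hj' := congrArg (subst ![(PowerSeries.X : R⟦X⟧), i]) hj
    rw [subst_mul hs, subst_subst_powerSeries (hasSubst_toPowerSeries F) hs,
      subst_subst_powerSeries (.X j) hs, h, subst_X hs] at hj'
    simpa [PowerSeries.subst_zero_eq_C_constantCoeff, constantCoeff_invariantDifferential] using hj'
  have hchain := derivative_subst_pair .X' hi F.toPowerSeries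
  rw [h, pderiv_eq (invariantDifferential_subst_add_mul_pderiv_zero F),
    pderiv_eq (invariantDifferential_subst_add_mul_pderiv_one F), map_zero,
    PowerSeries.derivative_X, mul_one] at hchain
  simp only [Matrix.cons_val_zero, Matrix.cons_val_one, PowerSeries.X_subst] at hchain
  linear_combination -hchain

end InvariantDifferential

section CoefficientFunctions

variable {R : Type*} [CommRing R]

theorem hahnSeries_coeff_mul {Γ S : Type*} [AddCommGroup Γ] [PartialOrder Γ]
    [IsOrderedAddMonoid Γ] [NonUnitalNonAssocSemiring S] (x y : HahnSeries Γ S) (n : Γ) :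
    (x * y).coeff n = ∑ᶠ i, x.coeff i * y.coeff (n - i) := by
  classical
  rw [HahnSeries.coeff_mul, finsum_eq_sum_of_support_subset (s :=
    (Finset.antidiagonal x.isPWO_support y.isPWO_support n).image Prod.fst)]
  · rw [Finset.sum_image]
    · refine Finset.sum_congr rfl fun p hp => ?_
      rw [← (Finset.mem_antidiagonal.mp hp).2.2, add_sub_cancel_left]
    · intro p hp q hq h
      have hp' := (Finset.mem_antidiagonal.mp hp).2.2
      have hq' := (Finset.mem_antidiagonal.mp hq).2.2
      rw [← hq', h] at hp'
      exact Prod.ext h (add_left_cancel hp')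
  · intro i hi
    refine Finset.mem_coe.mpr (Finset.mem_image.mpr ⟨(i, n - i), ?_, rfl⟩)
    exact Finset.mem_antidiagonal.mpr
      ⟨left_ne_zero_of_mul hi, right_ne_zero_of_mul hi, add_sub_cancel i n⟩

/-- The coefficients of a power series as a function on `ℤ`, zero at the negative integers. They are
read off the associated Hahn series, whose product is the convolution over all of `ℤ`. -/
noncomputable def coeffFun (f : R⟦X⟧) : ℤ → R := (HahnSeries.ofPowerSeries ℤ R f).coeff

/-- The embedding of power series in two variables into Hahn series over `ℤ × ℤ`. -/
noncomputable def ofPowerSeries₂ : MvPowerSeries (Fin 2) R →+* HahnSeries (ℤ × ℤ) R :=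
  (HahnSeries.embDomainRingHom
    (((Nat.castAddMonoidHom ℤ).comp (Finsupp.applyAddHom 0)).prod
      ((Nat.castAddMonoidHom ℤ).comp (Finsupp.applyAddHom (1 : Fin 2))))
    (fun e e' h => by ext i; fin_cases i <;> simp_all)
    (fun e e' => by simp [Finsupp.le_def, Fin.forall_fin_two])).comp
    (HahnSeries.toMvPowerSeries (R := R) (σ := Fin 2)).symm.toRingHom

/-- The coefficients of a power series in two variables as a function on `ℤ × ℤ`, zero outside
`ℕ × ℕ`. -/
noncomputable def coeffFun₂ (f : MvPowerSeries (Fin 2) R) (a b : ℤ) : R :=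
  (ofPowerSeries₂ f).coeff (a, b)

theorem coeffFun_natCast (f : R⟦X⟧) (n : ℕ) : coeffFun f n = PowerSeries.coeff n f :=
  HahnSeries.ofPowerSeries_apply_coeff f n

theorem coeffFun_of_neg (f : R⟦X⟧) {n : ℤ} (hn : n < 0) : coeffFun f n = 0 :=
  (PowerSeries.coeff_coe f n).trans (if_pos hn)

theorem coeffFun₂_natCast (f : MvPowerSeries (Fin 2) R) (e : Fin 2 →₀ ℕ) :
    coeffFun₂ f (e 0) (e 1) = f.coeff e :=
  HahnSeries.embDomain_coeff (a := e)

theorem coeffFun₂_of_neg (f : MvPowerSeries (Fin 2) R) {a b : ℤ} (h : a < 0 ∨ b < 0) :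
    coeffFun₂ f a b = 0 := by
  refine HahnSeries.embDomain_of_notMem_range ?_
  rintro ⟨e, he⟩
  have h₀ : (e 0 : ℤ) = a := congrArg Prod.fst he
  have h₁ : (e 1 : ℤ) = b := congrArg Prod.snd he
  omega

theorem eq_coeffFun_iff {g : ℤ → R} {f : R⟦X⟧} :
    g = coeffFun f ↔ (∀ n < 0, g n = 0) ∧ ∀ n : ℕ, g n = PowerSeries.coeff n f := by
  constructor
  · rintro rfl
    exact ⟨fun n => coeffFun_of_neg f, coeffFun_natCast f⟩
  · rintro ⟨hneg, hnat⟩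
    funext n
    rcases lt_or_ge n 0 with hn | hn
    · rw [hneg n hn, coeffFun_of_neg f hn]
    · lift n to ℕ using hn
      rw [hnat, coeffFun_natCast]

theorem eq_coeffFun₂_iff {g : ℤ → ℤ → R} {f : MvPowerSeries (Fin 2) R} :
    g = coeffFun₂ f ↔ (∀ a b, a < 0 ∨ b < 0 → g a b = 0) ∧ ∀ e, g (e 0) (e 1) = f.coeff e := by
  constructor
  · rintro rfl
    exact ⟨fun a b => coeffFun₂_of_neg f, coeffFun₂_natCast f⟩
  · rintro ⟨hneg, hnat⟩
    funext a b
    by_cases h : a < 0 ∨ b < 0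
    · rw [hneg a b h, coeffFun₂_of_neg f h]
    · push Not at h
      lift a to ℕ using h.1
      lift b to ℕ using h.2
      let e : Fin 2 →₀ ℕ := Finsupp.equivFunOnFinite.symm ![a, b]
      exact (hnat e).trans (coeffFun₂_natCast f e).symm

theorem coeffFun₂_injective :
    Function.Injective (coeffFun₂ : MvPowerSeries (Fin 2) R → ℤ → ℤ → R) := fun f g h => by
  ext e
  rw [← coeffFun₂_natCast, h, coeffFun₂_natCast]

theorem oneS_eq_coeffFun : oneS R = coeffFun 1 := by
  funext n
  simp [oneS, coeffFun, HahnSeries.coeff_one]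

theorem mulS_coeffFun (f g : R⟦X⟧) : mulS (coeffFun f) (coeffFun g) = coeffFun (f * g) := by
  funext n
  simp only [mulS, coeffFun, map_mul, hahnSeries_coeff_mul, smul_eq_mul]

theorem pow1_coeffFun (f : R⟦X⟧) (k : ℕ) : pow1 (coeffFun f) k = coeffFun (f ^ k) := by
  induction k with
  | zero => rw [pow_zero, pow1, oneS_eq_coeffFun]
  | succ k ih => rw [pow1, ih, mulS_coeffFun, pow_succ']

theorem comp1_coeffFun (p : R⟦X⟧) {f : R⟦X⟧} (hf : PowerSeries.HasSubst f) :
    comp1 (coeffFun p) (coeffFun f) = coeffFun (p.subst f) := by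
  refine eq_coeffFun_iff.mpr ⟨fun n hn => ?_, fun n => ?_⟩
  · simp [comp1, pow1_coeffFun, coeffFun_of_neg _ hn]
  · simp [comp1, pow1_coeffFun, coeffFun_natCast, PowerSeries.coeff_subst' hf]

theorem fderiv1_coeffFun (f : R⟦X⟧) : fderiv1 (coeffFun f) = coeffFun (d⁄dX R f) := by
  refine eq_coeffFun_iff.mpr ⟨fun n hn => ?_, fun n => ?_⟩
  · obtain rfl | hn' := eq_or_ne n (-1)
    · simp [fderiv1]
    · rw [fderiv1, coeffFun_of_neg f (by omega), mul_zero]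
  · rw [fderiv1, PowerSeries.coeff_derivative, ← coeffFun_natCast, mul_comm]
    simp

theorem oneS2_eq_coeffFun₂ : oneS2 R = coeffFun₂ 1 := by
  funext a b
  simp [oneS2, coeffFun₂, HahnSeries.coeff_one]

theorem mulS2_coeffFun₂ (f g : MvPowerSeries (Fin 2) R) :
    mulS2 (coeffFun₂ f) (coeffFun₂ g) = coeffFun₂ (f * g) := by
  funext a b
  simp only [mulS2, coeffFun₂, map_mul, hahnSeries_coeff_mul, smul_eq_mul]
  rfl

theorem pow2_coeffFun₂ (f : MvPowerSeries (Fin 2) R) (k : ℕ) :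
    pow2 (coeffFun₂ f) k = coeffFun₂ (f ^ k) := by
  induction k with
  | zero => rw [pow_zero, pow2, oneS2_eq_coeffFun₂]
  | succ k ih => rw [pow2, ih, mulS2_coeffFun₂, pow_succ']

theorem comp2_coeffFun₂ (p : R⟦X⟧) {f : MvPowerSeries (Fin 2) R} (hf : PowerSeries.HasSubst f) :
    comp2 (coeffFun p) (coeffFun₂ f) = coeffFun₂ (p.subst f) := by
  refine eq_coeffFun₂_iff.mpr ⟨fun a b h => ?_, fun e => ?_⟩
  · simp [comp2, pow2_coeffFun₂, coeffFun₂_of_neg _ h]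
  · simp [comp2, pow2_coeffFun₂, coeffFun_natCast, coeffFun₂_natCast, PowerSeries.coeff_subst hf]

theorem d10_coeffFun₂ (f : MvPowerSeries (Fin 2) R) :
    d10 (coeffFun₂ f) = coeffFun₂ (pderiv R 0 f) := by
  refine eq_coeffFun₂_iff.mpr ⟨fun a b h => ?_, fun e => ?_⟩
  · obtain rfl | ha := eq_or_ne a (-1)
    · simp [d10]
    · rw [d10, coeffFun₂_of_neg f (by omega), mul_zero]
  · rw [d10, coeff_pderiv, ← coeffFun₂_natCast, mul_comm]
    simp

theorem d01_coeffFun₂ (f : MvPowerSeries (Fin 2) R) :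
    d01 (coeffFun₂ f) = coeffFun₂ (pderiv R 1 f) := by
  refine eq_coeffFun₂_iff.mpr ⟨fun a b h => ?_, fun e => ?_⟩
  · obtain rfl | hb := eq_or_ne b (-1)
    · simp [d01]
    · rw [d01, coeffFun₂_of_neg f (by omega), mul_zero]
  · rw [d01, coeff_pderiv, ← coeffFun₂_natCast, mul_comm]
    simp

theorem coeffFun₂_subst_X_zero (p : R⟦X⟧) :
    coeffFun₂ (p.subst (X (0 : Fin 2))) = fun a b => if b = 0 then coeffFun p a else 0 := by
  refine (eq_coeffFun₂_iff.mpr ⟨fun a b h => ?_, fun e => ?_⟩).symm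
  · split_ifs with hb
    · exact coeffFun_of_neg p (by omega)
    · rfl
  · have : e = Finsupp.single 0 (e 0) ↔ e 1 = 0 := by
      simp [Finsupp.ext_iff, Fin.forall_fin_two]
    simp [PowerSeries.coeff_subst_single, this, coeffFun_natCast]

theorem coeffFun₂_subst_X_one (p : R⟦X⟧) :
    coeffFun₂ (p.subst (X (1 : Fin 2))) = fun a b => if a = 0 then coeffFun p b else 0 := by
  refine (eq_coeffFun₂_iff.mpr ⟨fun a b h => ?_, fun e => ?_⟩).symm
  · split_ifs with ha
    · exact coeffFun_of_neg p (by omega)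
    · rfl
  · have : e = Finsupp.single 1 (e 1) ↔ e 0 = 0 := by
      simp [Finsupp.ext_iff, Fin.forall_fin_two]
    simp [PowerSeries.coeff_subst_single, this, coeffFun_natCast]

theorem coeffFun_neg (f : R⟦X⟧) : coeffFun (-f) = fun n => -coeffFun f n := by
  funext n
  simp [coeffFun]

theorem coeffFun_X_pow_mul (f : R⟦X⟧) (i n : ℕ) :
    coeffFun (PowerSeries.X ^ i * f) n = coeffFun f (n - i) := by
  have h := HahnSeries.coeff_single_mul_add (r := (1 : R))
    (x := HahnSeries.ofPowerSeries ℤ R f) (a := (n : ℤ) - i) (b := i)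
  rwa [← HahnSeries.ofPowerSeries_X_pow, ← map_mul, sub_add_cancel, one_mul] at h

theorem invOne_coeffFun {f : R⟦X⟧} (hf : f.constantCoeff = 1) :
    invOne (coeffFun f) = coeffFun (f.invOfUnit 1) := by
  have hs : PowerSeries.HasSubst (1 - f) := .of_constantCoeff_zero' (by simp [hf])
  let geom : R⟦X⟧ := PowerSeries.mk 1
  have geom_mul : geom.subst (1 - f) * f = 1 := by
    have h := congrArg (PowerSeries.substAlgHom hs) (PowerSeries.mk_one_mul_one_sub_eq_one R)
    rwa [map_mul, map_sub, map_one, PowerSeries.substAlgHom_X, sub_sub_cancel,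
      PowerSeries.coe_substAlgHom] at h
  have geom_eq : f.invOfUnit 1 = geom.subst (1 - f) := by
    linear_combination geom.subst (1 - f) * PowerSeries.mul_invOfUnit f 1 hf -
      f.invOfUnit 1 * geom_mul
  have hone : hOneS (coeffFun f) = coeffFun (f - 1) := by
    funext n
    simp [hOneS, oneS_eq_coeffFun, coeffFun]
  rw [geom_eq, ← comp1_coeffFun _ hs]
  funext n
  refine finsum_congr fun k => ?_
  rw [hone, pow1_coeffFun, pow1_coeffFun, coeffFun_natCast, PowerSeries.coeff_mk, Pi.one_apply,
    one_mul, ← neg_sub f 1]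
  rcases k.even_or_odd with hk | hk
  · rw [hk.neg_one_pow, hk.neg_pow, one_mul]
  · rw [hk.neg_one_pow, hk.neg_pow, neg_one_mul, coeffFun_neg]

end CoefficientFunctions

section Associativity

variable {R : Type*} [CommRing R]

theorem finsum_comp_of_support_subset {α β M : Type*} [AddCommMonoid M] {c : α → β}
    (hc : c.Injective) {f : β → M} (hf : f.support ⊆ Set.range c) :
    ∑ᶠ a, f (c a) = ∑ᶠ b, f b := by
  rw [← finsum_mem_range hc, ← finsum_mem_univ f]
  refine finsum_mem_inter_support_eq' _ _ _ fun b hb => ?_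
  simpa using hf hb

open scoped Classical in
theorem coeff_subst_X_X {τ : Type*} {i j : τ} (hij : i ≠ j) (f : MvPowerSeries (Fin 2) R)
    (e : τ →₀ ℕ) :
    coeff e (f.subst ![X (R := R) i, X j]) =
      if ∀ t, t ≠ i → t ≠ j → e t = 0 then coeffFun₂ f (e i) (e j) else 0 := by
  let ι : Fin 2 ↪ τ := ⟨![i, j], by simp [Function.Injective, Fin.forall_fin_two, hij, hij.symm]⟩
  have hι (t : τ) : t ∉ Set.range ι ↔ t ≠ i ∧ t ≠ j := by
    simp only [Set.mem_range, Fin.exists_fin_two, not_or]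
    exact and_congr ne_comm ne_comm
  have hrename : f.subst ![X i, X j] = rename ι f := by
    rw [rename_eq_subst]
    congr 1
    funext s
    fin_cases s <;> rfl
  rw [hrename]
  split_ifs with he
  · have he' : ↑e.support ⊆ Set.range ι := fun t ht => by
      by_contra h
      exact Finsupp.mem_support_iff.mp ht (he t ((hι t).mp h).1 ((hι t).mp h).2)
    rw [← Finsupp.embDomain_comapDomain he', coeff_embDomain_rename, ← coeffFun₂_natCast,
      Finsupp.embDomain_comapDomain he']
    rfl
  · refine coeff_rename_eq_zero ι f fun h => ?_
    exact he fun t hti htj =>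
      (Finsupp.mem_range_mapDomain_iff ι ι.injective e).mp h t ((hι t).mpr ⟨hti, htj⟩)

theorem coeff_subst_X_X_mul_X_pow {i j k : Fin 3} (hij : i ≠ j) (hik : i ≠ k) (hjk : j ≠ k)
    (f : MvPowerSeries (Fin 2) R) (n : ℕ) (e : Fin 3 →₀ ℕ) :
    coeff e (f.subst ![X i, X j] * X k ^ n) =
      if n = e k then coeffFun₂ f (e i) (e j) else 0 := by
  classical
  have hk (t : Fin 3) (hi : t ≠ i) (hj : t ≠ j) : t = k := by omega
  have hsupp : (∀ t, t ≠ i → t ≠ j → (e - Finsupp.single k n) t = 0) ↔ e k ≤ n := by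
    refine ⟨fun h => by simpa [tsub_eq_zero_iff_le] using h k hik.symm hjk.symm, ?_⟩
    rintro h t hi hj
    simpa [hk t hi hj, tsub_eq_zero_iff_le] using h
  rw [X_pow_eq, coeff_mul_monomial, mul_one, coeff_subst_X_X hij, ← ite_and]
  simp only [hsupp, Finsupp.single_le_iff, ← le_antisymm_iff]
  simp [hik.symm, hjk.symm]

theorem coeff_subst_subst_X {i j k : Fin 3} (hij : i ≠ j) (hik : i ≠ k) (hjk : j ≠ k)
    (f : MvPowerSeries (Fin 2) R) {g : MvPowerSeries (Fin 2) R} (hg : PowerSeries.HasSubst g)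
    (e : Fin 3 →₀ ℕ) :
    coeff e (f.subst ![g.subst ![X i, X j], X (R := R) k]) =
      ∑ᶠ m : ℕ, coeffFun₂ f m (e k) * coeffFun₂ (g ^ m) (e i) (e j) := by
  have hX (t : Fin 3) : PowerSeries.HasSubst (X t : MvPowerSeries (Fin 3) R) := .X t
  have hs := hasSubst_pair (hX i) (hX j)
  have coeff_term (d : Fin 2 →₀ ℕ) :
      coeff e (d.prod fun s n => ![g.subst ![X i, X j], X (R := R) k] s ^ n) =
        if d 1 = e k then coeffFun₂ (g ^ d 0) (e i) (e j) else 0 := by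
    rw [← coeff_subst_X_X_mul_X_pow hij hik hjk, subst_pow hs]
    simp [Finsupp.prod_fintype]
  let c (m : ℕ) : Fin 2 →₀ ℕ := Finsupp.equivFunOnFinite.symm ![m, e k]
  have hc : c.Injective := fun m m' h => DFunLike.congr_fun h 0
  rw [coeff_subst (hasSubst_pair (IsNilpotent_subst hs hg) (hX k)),
    ← finsum_comp_of_support_subset hc]
  · refine finsum_congr fun m => ?_
    rw [coeff_term, if_pos (by rfl), ← coeffFun₂_natCast, smul_eq_mul]
    rfl
  · intro d hd
    have h₁ : d 1 = e k := by
      by_contra h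
      exact hd (by simp only [coeff_term, if_neg h, smul_zero])
    exact ⟨d 0, by ext s; fin_cases s <;> simp [c, h₁]⟩

theorem coeff_subst_X_left (f : MvPowerSeries (Fin 2) R) {g : R⟦X⟧} (hg : PowerSeries.HasSubst g)
    (n : ℕ) :
    PowerSeries.coeff n (f.subst ![(PowerSeries.X : R⟦X⟧), g]) =
      ∑ᶠ p : ℤ × ℕ, coeffFun₂ f p.1 p.2 * coeffFun (g ^ p.2) (n - p.1) := by
  let c (d : Fin 2 →₀ ℕ) : ℤ × ℕ := (d 0, d 1)
  have hc : c.Injective := fun d d' h => by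
    ext i
    fin_cases i <;> simp_all [c]
  rw [PowerSeries.coeff, coeff_subst (hasSubst_pair .X' hg), ← finsum_comp_of_support_subset hc]
  · refine finsum_congr fun d => ?_
    rw [← PowerSeries.coeff, ← coeffFun₂_natCast, ← coeffFun_X_pow_mul, coeffFun_natCast]
    simp [Finsupp.prod_fintype, c]
  · rintro ⟨a, b⟩ h
    have ha : 0 ≤ a := by
      by_contra! ha
      exact h (by simp [coeffFun₂_of_neg f (.inl ha)])
    lift a to ℕ using ha
    exact ⟨Finsupp.equivFunOnFinite.symm ![a, b], rfl⟩

end Associativity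

end FormalCalculus

namespace FormalGroupLaw

open FormalCalculus MvPowerSeries
open scoped PowerSeries

variable {R : Type*} [CommRing R] (𝓕 : FormalGroupLaw R)

/-- The group law as a power series in two variables. -/
noncomputable def series : MvPowerSeries (Fin 2) R := fun e => 𝓕.F (e 0) (e 1)

theorem coeffFun₂_series : coeffFun₂ 𝓕.series = 𝓕.F :=
  (eq_coeffFun₂_iff.mpr ⟨𝓕.F_supp, fun _ => rfl⟩).symm

theorem hasSubst_series : PowerSeries.HasSubst 𝓕.series :=
  .of_constantCoeff_zero (𝓕.F_modw 0)

theorem series_subst_X_one_X_zero : 𝓕.series.subst ![X 1, X 0] = 𝓕.series := by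
  ext e
  rw [coeff_subst_X_X (by decide), if_pos (by simp [Fin.forall_fin_two]), coeffFun₂_series,
    𝓕.F_comm]
  rfl

theorem series_subst_comm {σ : Type*} {u v : MvPowerSeries σ R} (hu : PowerSeries.HasSubst u)
    (hv : PowerSeries.HasSubst v) : 𝓕.series.subst ![u, v] = 𝓕.series.subst ![v, u] := by
  have hX (i : Fin 2) : PowerSeries.HasSubst (X i : MvPowerSeries (Fin 2) R) := .X i
  have hs := hasSubst_pair hv hu
  conv_rhs => rw [← series_subst_X_one_X_zero]
  rw [subst_subst_pair (hX 1) (hX 0) hs, subst_X hs, subst_X hs]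
  rfl

theorem series_assoc :
    𝓕.series.subst ![𝓕.series.subst ![X (0 : Fin 3), X 1], X (R := R) 2] =
      𝓕.series.subst ![X (R := R) 0, 𝓕.series.subst ![X (1 : Fin 3), X 2]] := by
  have hX (i : Fin 3) : PowerSeries.HasSubst (X i : MvPowerSeries (Fin 3) R) := .X i
  ext e
  rw [𝓕.series_subst_comm (hX 0)
      (IsNilpotent_subst (hasSubst_pair (hX 1) (hX 2)) 𝓕.hasSubst_series),
    coeff_subst_subst_X (by decide) (by decide) (by decide) _ 𝓕.hasSubst_series,
    coeff_subst_subst_X (by decide) (by decide) (by decide) _ 𝓕.hasSubst_series]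
  simp only [← pow2_coeffFun₂, coeffFun₂_series]
  rw [𝓕.F_assoc]
  exact finsum_congr fun n => by rw [𝓕.F_comm]

/-- The group law as a formal group in the sense of Mathlib; `inv` is dropped. -/
noncomputable def toFormalGroup : FormalGroup R where
  toPowerSeries := 𝓕.series
  zero_constantCoeff := 𝓕.F_modw 0
  lin_coeff_X := by simp [← coeffFun₂_natCast, coeffFun₂_series, 𝓕.F_modw]
  lin_coeff_Y := by simp [← coeffFun₂_natCast, coeffFun₂_series, 𝓕.F_comm 0 1, 𝓕.F_modw]
  assoc := 𝓕.series_assoc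

instance isComm_toFormalGroup : 𝓕.toFormalGroup.IsComm := ⟨𝓕.series_subst_X_one_X_zero.symm⟩

/-- The inverse `ι` as a power series. -/
noncomputable def invSeries : R⟦X⟧ := PowerSeries.mk fun n => 𝓕.inv n

theorem coeffFun_invSeries : coeffFun 𝓕.invSeries = 𝓕.inv :=
  (eq_coeffFun_iff.mpr
    ⟨fun n hn => 𝓕.inv_supp n (by omega), fun n => by rw [invSeries, PowerSeries.coeff_mk]⟩).symm

theorem hasSubst_invSeries : PowerSeries.HasSubst 𝓕.invSeries :=
  .of_constantCoeff_zero' (𝓕.inv_supp 0 one_pos)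

theorem series_subst_X_invSeries :
    𝓕.series.subst ![(PowerSeries.X : R⟦X⟧), 𝓕.invSeries] = 0 := by
  refine PowerSeries.ext fun n => ?_
  rw [coeff_subst_X_left _ 𝓕.hasSubst_invSeries]
  simp only [← pow1_coeffFun, coeffFun_invSeries, coeffFun₂_series, 𝓕.inv_eq, map_zero]

theorem coeffFun_translationDerivative :
    coeffFun (translationDerivative 𝓕.toFormalGroup) = fun i => 𝓕.F i 1 := by
  refine (eq_coeffFun_iff.mpr ⟨fun n hn => 𝓕.F_supp n 1 (.inl hn), fun n => ?_⟩).symm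
  rw [coeff_translationDerivative, ← coeffFun₂_natCast]
  simp [toFormalGroup, coeffFun₂_series]

theorem coeffFun_invariantDifferential :
    coeffFun (invariantDifferential 𝓕.toFormalGroup) = 𝓕.pF := by
  rw [pF, ← coeffFun_translationDerivative,
    invOne_coeffFun (constantCoeff_translationDerivative 𝓕.toFormalGroup)]
  rfl

theorem eq_pF_of_mulS2_comp2_d01 {q : ℤ → R} (hneg : ∀ n < 0, q n = 0) (h0 : q 0 = 1)
    (hq : mulS2 (comp2 q 𝓕.F) (d01 𝓕.F) = fun a b => if a = 0 then q b else 0) : q = 𝓕.pF := by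
  obtain ⟨p, rfl⟩ : ∃ p, q = coeffFun p :=
    ⟨.mk fun n => q n, eq_coeffFun_iff.mpr ⟨hneg, fun n => by rw [PowerSeries.coeff_mk]⟩⟩
  rw [← coeffFun₂_series, comp2_coeffFun₂ p 𝓕.hasSubst_series, d01_coeffFun₂, mulS2_coeffFun₂,
    ← coeffFun₂_subst_X_one] at hq
  have hp := eq_C_mul_invariantDifferential 𝓕.toFormalGroup (coeffFun₂_injective hq)
  have hp0 : p.constantCoeff = 1 := by
    rw [← h0, ← PowerSeries.coeff_zero_eq_constantCoeff_apply, ← coeffFun_natCast, Nat.cast_zero]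
  rw [hp, hp0, map_one, one_mul, coeffFun_invariantDifferential]

theorem pF_of_neg (n : ℤ) (hn : n < 0) : 𝓕.pF n = 0 := by
  rw [← coeffFun_invariantDifferential, coeffFun_of_neg _ hn]

theorem pF_zero : 𝓕.pF 0 = 1 := by
  rw [← coeffFun_invariantDifferential, ← Nat.cast_zero, coeffFun_natCast,
    PowerSeries.coeff_zero_eq_constantCoeff_apply, constantCoeff_invariantDifferential]

theorem mulS_F_one_pF : mulS (fun i => 𝓕.F i 1) 𝓕.pF = oneS R := by
  rw [← coeffFun_translationDerivative, ← coeffFun_invariantDifferential, mulS_coeffFun,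
    translationDerivative_mul_invariantDifferential, oneS_eq_coeffFun]

theorem mulS2_comp2_pF_d10 :
    mulS2 (comp2 𝓕.pF 𝓕.F) (d10 𝓕.F) = fun a b => if b = 0 then 𝓕.pF a else 0 := by
  rw [← coeffFun_invariantDifferential, ← coeffFun₂_series, comp2_coeffFun₂ _ 𝓕.hasSubst_series,
    d10_coeffFun₂, mulS2_coeffFun₂, ← coeffFun₂_subst_X_zero]
  exact congrArg coeffFun₂ (invariantDifferential_subst_add_mul_pderiv_zero 𝓕.toFormalGroup)

theorem mulS2_comp2_pF_d01 :
    mulS2 (comp2 𝓕.pF 𝓕.F) (d01 𝓕.F) = fun a b => if a = 0 then 𝓕.pF b else 0 := by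
  rw [← coeffFun_invariantDifferential, ← coeffFun₂_series, comp2_coeffFun₂ _ 𝓕.hasSubst_series,
    d01_coeffFun₂, mulS2_coeffFun₂, ← coeffFun₂_subst_X_one]
  exact congrArg coeffFun₂ (invariantDifferential_subst_add_mul_pderiv_one 𝓕.toFormalGroup)

theorem mulS_comp1_pF_inv_fderiv1 :
    mulS (comp1 𝓕.pF 𝓕.inv) (fderiv1 𝓕.inv) = fun n => -𝓕.pF n := by
  rw [← coeffFun_invariantDifferential, ← coeffFun_invSeries,
    comp1_coeffFun _ 𝓕.hasSubst_invSeries, fderiv1_coeffFun, mulS_coeffFun,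
    invariantDifferential_subst_mul_derivative 𝓕.toFormalGroup 𝓕.hasSubst_invSeries
      𝓕.series_subst_X_invSeries, coeffFun_neg]

end FormalGroupLaw

/-- `p_F(z) = F^{0,1}(z,0)⁻¹` is the unique power series `p` with
`p(0) = 1` satisfying `p(F(z,w))·F^{1,0}(z,w) = p(z)` and `p(F(z,w))·F^{0,1}(z,w) = p(w)`;
moreover `p_F(ι(z))·ι'(z) = -p_F(z)`. -/
theorem pF_characterization (R : Type*) [CommRing R] (𝓕 : FormalGroupLaw R) :
    ((∀ n : ℤ, n < 0 → 𝓕.pF n = 0) ∧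
     mulS (fun i => 𝓕.F i 1) 𝓕.pF = oneS R ∧
     𝓕.pF 0 = 1 ∧
     mulS2 (comp2 𝓕.pF 𝓕.F) (d10 𝓕.F) = (fun a b => if b = 0 then 𝓕.pF a else 0) ∧
     mulS2 (comp2 𝓕.pF 𝓕.F) (d01 𝓕.F) = (fun a b => if a = 0 then 𝓕.pF b else 0)) ∧
    (∀ q : ℤ → R, (∀ n : ℤ, n < 0 → q n = 0) → q 0 = 1 →
      mulS2 (comp2 q 𝓕.F) (d10 𝓕.F) = (fun a b => if b = 0 then q a else 0) →
      mulS2 (comp2 q 𝓕.F) (d01 𝓕.F) = (fun a b => if a = 0 then q b else 0) →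
      q = 𝓕.pF) ∧
    mulS (comp1 𝓕.pF 𝓕.inv) (fderiv1 𝓕.inv) = (fun n => -𝓕.pF n) := by
  exact ⟨⟨𝓕.pF_of_neg, 𝓕.mulS_F_one_pF, 𝓕.pF_zero, 𝓕.mulS2_comp2_pF_d10, 𝓕.mulS2_comp2_pF_d01⟩,
    fun _ hneg h0 _ hd01 => 𝓕.eq_pF_of_mulS2_comp2_d01 hneg h0 hd01, 𝓕.mulS_comp1_pF_inv_fderiv1⟩
end

section
/- Let R be a commutative ℚ-algebra and F a formal group law over R. Then there exists a unique formal power series φ ∈ R⟦z⟧ (the logarithm of F) satisfying φ(F(z,w)) = φ(z) + φ(w) in R⟦z,w⟧, φ(0) = 0, and φ'(0) = 1. Moreover, its formal derivative satisfies φ'(z) = F^{0,1}(z,0)^{-1}. -/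
/-!
Coefficient-wise formal calculus for vertex `F`-algebras, following
M. Upmeier, "Vertex F-Algebras and Their Associated Lie Algebra".

Series in one, two or three variables are represented by their coefficient
functions `ℤ → R`, `ℤ → ℤ → R`, …; products are given by coefficient-wise
(finite) sums, expressed via `finsum` (`∑ᶠ`).
-/

open scoped BigOperators

/-!
Differentiating `φ(F(z,w)) = φ(z) + φ(w)` in `w` at `w = 0` gives `F^{0,1}(z,0) φ'(z) = 1`, and
over a torsion-free ring this equation together with `φ(0) = 0` determines `φ`.

Conversely, put `p(z) = F^{0,1}(z,0)` and let `φ` be the antiderivative of `p⁻¹` with `φ(0) = 0`,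
which exists over a `ℚ`-algebra. Differentiating `F(F(z,w),v) = F(z,F(w,v))` in `v` at `v = 0`
gives `p(F(z,w)) = p(w) F^{0,1}(z,w)`, so that
`∂/∂w φ(F(z,w)) = F^{0,1}(z,w) / p(F(z,w)) = 1 / p(w) = φ'(w)`. Hence `φ(F(z,w))` and `φ(z) + φ(w)`
have the same derivative in `w`, and both equal `φ(z)` at `w = 0`.
-/

open PowerSeries (HasSubst derivative)
open MvPowerSeries (pderiv)

theorem finsum_eq_finsum_comp_of_injective {α β M : Type*} [AddCommMonoid M] {f : β → M}
    {g : α → β} (hg : Function.Injective g) (hf : Function.support f ⊆ Set.range g) :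
    ∑ᶠ b, f b = ∑ᶠ a, f (g a) := by
  rw [← finsum_mem_range (f := f) hg, ← finsum_mem_univ f]
  exact finsum_mem_inter_support_eq' _ _ _ fun x hx => by simpa using hf hx

section FormalDerivatives

variable {R : Type*} [CommRing R] {σ : Type*}

theorem exists_forall_coeff_pow_mul_eq_zero {a : MvPowerSeries σ R} (ha : HasSubst a)
    (d : σ →₀ ℕ) : ∃ N, ∀ b, MvPowerSeries.coeff d (a ^ N * b) = 0 := by
  classical
  obtain ⟨m, hm⟩ := ha
  refine ⟨m + d.degree, fun b => ?_⟩
  rw [MvPowerSeries.coeff_mul]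
  refine Finset.sum_eq_zero fun q hq => ?_
  have hdeg : q.1.degree ≤ d.degree := by
    rw [← Finset.HasAntidiagonal.mem_antidiagonal.mp hq, map_add]
    exact Nat.le_add_right _ _
  rw [MvPowerSeries.coeff_eq_zero_of_constantCoeff_nilpotent hm (by lia), zero_mul]

theorem pderiv_coe_subst {a : MvPowerSeries σ R} (ha : HasSubst a) (i : σ) (p : Polynomial R) :
    pderiv R i ((p : PowerSeries R).subst a) =
      (derivative R (p : PowerSeries R)).subst a * pderiv R i a := by
  simp [PowerSeries.subst_coe ha, PowerSeries.derivative_coe,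
    Derivation.comp_aeval_eq (a := a) (pderiv R i) p]

theorem pderiv_powerSeries_subst {a : MvPowerSeries σ R} (ha : HasSubst a) (i : σ)
    (f : PowerSeries R) :
    pderiv R i (f.subst a) = (derivative R f).subst a * pderiv R i a := by
  ext d
  obtain ⟨N, hN⟩ := exists_forall_coeff_pow_mul_eq_zero ha d
  obtain ⟨g, p, hf⟩ : ∃ (g : PowerSeries R) (p : Polynomial R),
      f = PowerSeries.X ^ N * g + (p : PowerSeries R) :=
    ⟨_, _, PowerSeries.eq_X_pow_mul_shift_add_trunc N f⟩
  have hX : pderiv R i (a ^ N) =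
      (derivative R (PowerSeries.X ^ N)).subst a * pderiv R i a := by
    simpa [PowerSeries.subst_pow ha, PowerSeries.subst_X ha] using
      pderiv_coe_subst ha i (Polynomial.X ^ N)
  have key : pderiv R i (f.subst a) = (derivative R f).subst a * pderiv R i a +
      a ^ N * (pderiv R i (g.subst a) - (derivative R g).subst a * pderiv R i a) := by
    simp only [hf, PowerSeries.subst_add ha, PowerSeries.subst_mul ha, PowerSeries.subst_pow ha,
      PowerSeries.subst_X ha, map_add, Derivation.leibniz, smul_eq_mul, pderiv_coe_subst ha, hX]
    ring
  rw [key, map_add, hN, add_zero]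

theorem eq_of_pderiv_eq [IsAddTorsionFree R] {f g : MvPowerSeries σ R} (i : σ)
    (hD : pderiv R i f = pderiv R i g)
    (h0 : ∀ d, d i = 0 → MvPowerSeries.coeff d f = MvPowerSeries.coeff d g) : f = g := by
  ext d
  by_cases hd : d i = 0
  · exact h0 d hd
  · have hle : Finsupp.single i 1 ≤ d := Finsupp.single_le_iff.mpr (Nat.one_le_iff_ne_zero.mpr hd)
    have h : d i • MvPowerSeries.coeff d f = d i • MvPowerSeries.coeff d g := by
      have h := congr(MvPowerSeries.coeff (d - Finsupp.single i 1) $hD)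
      simpa [MvPowerSeries.coeff_pderiv, tsub_add_cancel_of_le hle,
        Nat.cast_sub (Nat.one_le_iff_ne_zero.mpr hd), mul_comm] using h
    exact nsmul_right_injective hd h

theorem exists_derivative_eq [Algebra ℚ R] (f : PowerSeries R) :
    ∃ g : PowerSeries R, PowerSeries.constantCoeff g = 0 ∧ derivative R g = f := by
  -- The junk value `0⁻¹ = 0` makes the constant coefficient vanish.
  refine ⟨PowerSeries.mk fun n => (n : ℚ)⁻¹ • PowerSeries.coeff (n - 1) f, by simp, ?_⟩
  ext n
  have hn : (n : ℚ) + 1 ≠ 0 := n.cast_add_one_ne_zero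
  rw [PowerSeries.coeff_derivative, PowerSeries.coeff_mk, Nat.add_sub_cancel, smul_mul_assoc,
    mul_comm, show (n : R) + 1 = algebraMap ℚ R (n + 1) by simp, ← Algebra.smul_def, smul_smul]
  simp [hn]

end FormalDerivatives

section Holomorphic

variable {R : Type*} [CommRing R]

/-- A one-variable series is holomorphic, i.e. lies in `R⟦z⟧`, if it has no negative powers. -/
def IsHolomorphic (f : ℤ → R) : Prop := ∀ n < 0, f n = 0

/-- A two-variable series is holomorphic, i.e. lies in `R⟦z,w⟧`, if it has no negative powers
of either variable. -/
def IsHolomorphic₂ (f : ℤ → ℤ → R) : Prop := ∀ i j, i < 0 ∨ j < 0 → f i j = 0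

/-- The one-variable series `p(z)` as a two-variable series. -/
def inZ (p : ℤ → R) : ℤ → ℤ → R := fun a b => if b = 0 then p a else 0

/-- The one-variable series `p(w)` as a two-variable series. -/
def inW (p : ℤ → R) : ℤ → ℤ → R := fun a b => if a = 0 then p b else 0

namespace IsHolomorphic

theorem fderiv1 {f : ℤ → R} (hf : IsHolomorphic f) : IsHolomorphic (fderiv1 f) := by
  intro n hn
  rcases eq_or_ne n (-1) with rfl | h
  · simp [_root_.fderiv1]
  · rw [_root_.fderiv1, hf _ (by lia), mul_zero]

theorem inZ {p : ℤ → R} (hp : IsHolomorphic p) : IsHolomorphic₂ (inZ p) := by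
  rintro i j h
  simp only [_root_.inZ, ite_eq_right_iff]
  exact fun hj => hp i (by lia)

theorem inW {p : ℤ → R} (hp : IsHolomorphic p) : IsHolomorphic₂ (inW p) := by
  rintro i j h
  simp only [_root_.inW, ite_eq_right_iff]
  exact fun hi => hp j (by lia)

end IsHolomorphic

namespace IsHolomorphic₂

variable {f g : ℤ → ℤ → R}

theorem apply_left (hf : IsHolomorphic₂ f) (i : ℤ) : IsHolomorphic (f i) :=
  fun j hj => hf i j (Or.inr hj)

theorem apply_right (hf : IsHolomorphic₂ f) (j : ℤ) : IsHolomorphic fun i => f i j :=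
  fun i hi => hf i j (Or.inl hi)

theorem add (hf : IsHolomorphic₂ f) (hg : IsHolomorphic₂ g) : IsHolomorphic₂ (f + g) :=
  fun i j h => by simp [hf i j h, hg i j h]

theorem d01 (hf : IsHolomorphic₂ f) : IsHolomorphic₂ (d01 f) := by
  rintro i j (hi | hj)
  · rw [_root_.d01, hf _ _ (Or.inl hi), mul_zero]
  · exact (hf.apply_left i).fderiv1 j hj

theorem mulS2 (hf : IsHolomorphic₂ f) (hg : IsHolomorphic₂ g) : IsHolomorphic₂ (mulS2 f g) := by
  refine fun a b h => finsum_eq_zero_of_forall_eq_zero fun q => ?_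
  by_cases hq : q.1 < 0 ∨ q.2 < 0
  · rw [hf _ _ hq, zero_smul]
  · rw [hg _ _ (by lia), smul_zero]

theorem pow2 (hf : IsHolomorphic₂ f) : ∀ m, IsHolomorphic₂ (pow2 f m)
  | 0 => fun _ _ h => if_neg (by lia)
  | m + 1 => hf.mulS2 (hf.pow2 m)

theorem comp2 (hf : IsHolomorphic₂ f) (p : ℤ → R) : IsHolomorphic₂ (comp2 p f) :=
  fun a b h => finsum_eq_zero_of_forall_eq_zero fun m => by rw [hf.pow2 m a b h, mul_zero]

end IsHolomorphic₂

end Holomorphic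

section PowerSeries

variable {R : Type*} [CommRing R]

/-- The power series in `R⟦X⟧` with the coefficients of `f`; coefficients at negative indices
are dropped, so this is faithful on holomorphic series only. -/
def toPowerSeries (f : ℤ → R) : PowerSeries R := PowerSeries.mk fun n => f n

/-- The power series with the coefficients of `f`, the variables `z` and `w` being `X 0` and `X 1`;
coefficients with a negative index are dropped, so this is faithful on holomorphic series only. -/
def toMvPowerSeries (f : ℤ → ℤ → R) : MvPowerSeries (Fin 2) R := fun d => f (d 0) (d 1)

@[simp]
theorem coeff_toPowerSeries (f : ℤ → R) (n : ℕ) :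
    PowerSeries.coeff n (toPowerSeries f) = f n := PowerSeries.coeff_mk _ _

@[simp]
theorem coeff_toMvPowerSeries (f : ℤ → ℤ → R) (d : Fin 2 →₀ ℕ) :
    MvPowerSeries.coeff d (toMvPowerSeries f) = f (d 0) (d 1) := rfl

theorem IsHolomorphic.eq_of_toPowerSeries_eq {f g : ℤ → R} (hf : IsHolomorphic f)
    (hg : IsHolomorphic g) (h : toPowerSeries f = toPowerSeries g) : f = g := by
  funext n
  rcases lt_or_ge n 0 with hn | hn
  · rw [hf n hn, hg n hn]
  · lift n to ℕ using hn
    simpa using congr(PowerSeries.coeff n $h)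

theorem IsHolomorphic₂.eq_of_toMvPowerSeries_eq {f g : ℤ → ℤ → R} (hf : IsHolomorphic₂ f)
    (hg : IsHolomorphic₂ g) (h : toMvPowerSeries f = toMvPowerSeries g) : f = g := by
  funext a b
  by_cases hab : a < 0 ∨ b < 0
  · rw [hf a b hab, hg a b hab]
  · lift a to ℕ using by lia
    lift b to ℕ using by lia
    simpa using congr(MvPowerSeries.coeff (Finsupp.equivFunOnFinite.symm ![a, b]) $h)

theorem exists_toPowerSeries_eq (P : PowerSeries R) :
    ∃ f : ℤ → R, IsHolomorphic f ∧ toPowerSeries f = P :=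
  ⟨fun n => if n < 0 then 0 else PowerSeries.coeff n.toNat P, fun _ hn => if_pos hn, by ext; simp⟩

theorem toPowerSeries_oneS : toPowerSeries (oneS R) = 1 := by
  ext n
  simp [oneS, PowerSeries.coeff_one]

theorem toPowerSeries_fderiv1 (f : ℤ → R) :
    toPowerSeries (fderiv1 f) = derivative R (toPowerSeries f) := by
  ext n
  simp [fderiv1, PowerSeries.coeff_derivative, mul_comm]

theorem toPowerSeries_mulS {f g : ℤ → R} (hf : IsHolomorphic f) (hg : IsHolomorphic g) :
    toPowerSeries (mulS f g) = toPowerSeries f * toPowerSeries g := by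
  ext n
  rw [PowerSeries.coeff_mul, Finset.Nat.sum_antidiagonal_eq_sum_range_succ_mk]
  simp only [coeff_toPowerSeries, mulS, smul_eq_mul]
  rw [finsum_eq_finsum_comp_of_injective (g := ((↑) : ℕ → ℤ)) Nat.cast_injective,
    finsum_eq_finsetSum_of_support_subset (s := Finset.range n.succ)]
  · refine Finset.sum_congr rfl fun i hi => ?_
    rw [Nat.cast_sub (Nat.lt_succ_iff.mp (Finset.mem_range.mp hi))]
  · refine fun i => Function.mtr fun hi => ?_
    rw [Finset.coe_range, Set.mem_Iio] at hi
    simp [hg (n - i) (by lia)]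
  · refine fun i => Function.mtr fun hi => ?_
    have hi : i < 0 := lt_of_not_ge fun h => hi ⟨i.toNat, Int.toNat_of_nonneg h⟩
    simp [hf i hi]

theorem toMvPowerSeries_add (f g : ℤ → ℤ → R) :
    toMvPowerSeries (f + g) = toMvPowerSeries f + toMvPowerSeries g := rfl

theorem toMvPowerSeries_d01 (f : ℤ → ℤ → R) :
    toMvPowerSeries (d01 f) = pderiv R 1 (toMvPowerSeries f) := by
  ext d
  simp [d01, MvPowerSeries.coeff_pderiv, mul_comm]

theorem toMvPowerSeries_inZ (p : ℤ → R) :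
    toMvPowerSeries (inZ p) = (toPowerSeries p).subst (MvPowerSeries.X 0) := by
  ext d
  simp [inZ, PowerSeries.coeff_subst_single, Finsupp.ext_iff, Fin.forall_fin_two]

theorem toMvPowerSeries_inW (p : ℤ → R) :
    toMvPowerSeries (inW p) = (toPowerSeries p).subst (MvPowerSeries.X 1) := by
  ext d
  simp [inW, PowerSeries.coeff_subst_single, Finsupp.ext_iff, Fin.forall_fin_two]

theorem toMvPowerSeries_mulS2 {f g : ℤ → ℤ → R} (hf : IsHolomorphic₂ f) (hg : IsHolomorphic₂ g) :
    toMvPowerSeries (mulS2 f g) = toMvPowerSeries f * toMvPowerSeries g := by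
  classical
  ext d
  let e : (Fin 2 →₀ ℕ) → ℤ × ℤ := fun u => (u 0, u 1)
  have he : Function.Injective e := fun u v h => by
    simpa [e, Finsupp.ext_iff, Fin.forall_fin_two] using h
  rw [MvPowerSeries.coeff_mul]
  simp only [coeff_toMvPowerSeries, mulS2, smul_eq_mul]
  rw [finsum_eq_finsum_comp_of_injective he,
    finsum_eq_finsetSum_of_support_subset (s := Finset.Iic d)]
  · refine Finset.sum_nbij' (fun u => (u, d - u)) Prod.fst
      (fun u hu => Finset.HasAntidiagonal.mem_antidiagonal.mpr
        (add_tsub_cancel_of_le (Finset.mem_Iic.mp hu)))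
      (fun q hq => Finset.mem_Iic.mpr
        (le_self_add.trans_eq (Finset.HasAntidiagonal.mem_antidiagonal.mp hq)))
      (fun _ _ => rfl) (fun q hq => ?_) (fun u hu => ?_)
    · rw [← Finset.HasAntidiagonal.mem_antidiagonal.mp hq, add_tsub_cancel_left]
    · have hu := Finset.mem_Iic.mp hu
      simp [e, Nat.cast_sub (hu _)]
  · refine fun u => Function.mtr fun hu => ?_
    have hu : d 0 < u 0 ∨ d 1 < u 1 := by
      simpa [Finsupp.le_def, Fin.forall_fin_two, or_iff_not_imp_left] using hu
    simp only [e, Function.mem_support, not_not]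
    rw [hg _ _ (by lia), mul_zero]
  · rintro ⟨i, j⟩
    refine Function.mtr fun hij => ?_
    have hij : i < 0 ∨ j < 0 := by
      by_contra! h
      refine hij ⟨Finsupp.equivFunOnFinite.symm ![i.toNat, j.toNat], ?_⟩
      simp [e, h]
    simp [hf i j hij]

theorem toMvPowerSeries_pow2 {f : ℤ → ℤ → R} (hf : IsHolomorphic₂ f) (m : ℕ) :
    toMvPowerSeries (pow2 f m) = toMvPowerSeries f ^ m := by
  induction m with
  | zero =>
    ext d
    simp [pow2, oneS2, MvPowerSeries.coeff_one, Finsupp.ext_iff, Fin.forall_fin_two]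
  | succ m ih => rw [pow_succ', ← ih, pow2, toMvPowerSeries_mulS2 hf (hf.pow2 m)]

theorem toMvPowerSeries_comp2 {f : ℤ → ℤ → R} (hf : IsHolomorphic₂ f)
    (hs : HasSubst (toMvPowerSeries f)) (p : ℤ → R) :
    toMvPowerSeries (comp2 p f) = (toPowerSeries p).subst (toMvPowerSeries f) := by
  ext d
  simp [PowerSeries.coeff_subst hs, comp2, ← toMvPowerSeries_pow2 hf]

end PowerSeries

section Composition

variable {R : Type*} [CommRing R]

theorem mulS2_inW {M : Type*} [AddCommGroup M] [Module R M] (p : ℤ → R) (G : ℤ → ℤ → M) (a : ℤ) :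
    mulS2 (inW p) G a = mulS p (G a) := by
  funext b
  rw [mulS2, mulS, finsum_eq_finsum_comp_of_injective (g := fun j : ℤ => ((0 : ℤ), j))]
  · simp [inW]
  · exact Prod.mk_right_injective 0
  · rintro ⟨i, j⟩
    refine Function.mtr fun hij => ?_
    have hi : i ≠ 0 := by
      rintro rfl
      exact hij ⟨j, rfl⟩
    simp [inW, hi]

variable {p : ℤ → R} {f : ℤ → ℤ → R}

theorem pow2_apply_zero (hf : IsHolomorphic₂ f) (hf0 : ∀ i, f i 0 = if i = 1 then 1 else 0)
    (m : ℕ) (a : ℤ) : pow2 f m a 0 = if a = m then 1 else 0 := by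
  induction m generalizing a with
  | zero => simp [pow2, oneS2]
  | succ m ih =>
    rw [pow2, mulS2, finsum_eq_single _ ((1 : ℤ), (0 : ℤ))]
    · simp [hf0, ih, sub_eq_iff_eq_add]
    · rintro ⟨i, j⟩ hij
      rcases lt_trichotomy j 0 with hj | rfl | hj
      · simp [hf i j (Or.inr hj)]
      · have hi : i ≠ 1 := fun h => hij (by rw [h])
        simp [hf0, hi]
      · rw [hf.pow2 m _ _ (Or.inr (by lia)), smul_zero]

theorem pow2_apply_one (hf : IsHolomorphic₂ f) (hf0 : ∀ i, f i 0 = if i = 1 then 1 else 0)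
    (m : ℕ) (a : ℤ) : pow2 f m a 1 = m * f (a - m + 1) 1 := by
  induction m generalizing a with
  | zero => simp [pow2, oneS2]
  | succ m ih =>
    rw [pow2, mulS2, finsum_eq_finsetSum_of_support_subset
      (s := {((1 : ℤ), (0 : ℤ)), (a - m, 1)}), Finset.sum_pair (by simp)]
    · have h1 : a - 1 - (m : ℤ) + 1 = a - m := by ring
      have h2 : a - ((m + 1 : ℕ) : ℤ) + 1 = a - m := by push_cast; ring
      simp only [hf0, ih, pow2_apply_zero hf hf0, sub_self, sub_zero, sub_sub_cancel, if_true,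
        smul_eq_mul, h1, h2]
      push_cast
      ring
    · rintro ⟨i, j⟩
      refine Function.mtr fun hij => ?_
      obtain hj | rfl | rfl | hj : j < 0 ∨ j = 0 ∨ j = 1 ∨ 1 < j := by lia
      · simp [hf i j (Or.inr hj)]
      · have hi : i ≠ 1 := by rintro rfl; simp at hij
        simp [hf0, hi]
      · have hi : a - i ≠ m := by rintro h; simp [← h] at hij
        simp [pow2_apply_zero hf hf0, hi]
      · simp [hf.pow2 m (a - i) (1 - j) (Or.inr (by lia))]

theorem comp2_apply_zero (hp : IsHolomorphic p) (hf : IsHolomorphic₂ f)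
    (hf0 : ∀ i, f i 0 = if i = 1 then 1 else 0) (a : ℤ) : comp2 p f a 0 = p a := by
  simp only [comp2, pow2_apply_zero hf hf0]
  rcases lt_or_ge a 0 with ha | ha
  · rw [hp a ha]
    exact finsum_eq_zero_of_forall_eq_zero fun m => by simp [show a ≠ m by lia]
  · lift a to ℕ using ha
    rw [finsum_eq_single _ a fun m hm => by simp [hm.symm]]
    simp

theorem comp2_apply_one (hp : IsHolomorphic p) (hf : IsHolomorphic₂ f)
    (hf0 : ∀ i, f i 0 = if i = 1 then 1 else 0) (a : ℤ) :
    comp2 p f a 1 = mulS (fun i => f i 1) (fderiv1 p) a := by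
  rw [mulS, finsum_eq_finsum_comp_of_injective (g := fun m : ℕ => a - m + 1)]
  · refine finsum_congr fun m => ?_
    rw [pow2_apply_one hf hf0, fderiv1, show a - (a - (m : ℤ) + 1) + 1 = m by ring, smul_eq_mul]
    push_cast
    ring
  · intro m n h
    simpa using h
  · refine fun i => Function.mtr fun hi => ?_
    have hi : a - i + 1 < 0 := by
      by_contra! h
      exact hi ⟨(a - i + 1).toNat, by simp only [Int.toNat_of_nonneg h]; ring⟩
    simp [fderiv1, hp _ hi]

end Composition

namespace FormalGroupLaw

variable {R : Type*} [CommRing R] (𝓕 : FormalGroupLaw R)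

theorem isHolomorphic₂_F : IsHolomorphic₂ 𝓕.F := 𝓕.F_supp

/-- The series `F^{0,1}(z,0)`; its inverse `𝓕.pF` is the coefficient series of the invariant
1-form. -/
def F01 : ℤ → R := fun i => 𝓕.F i 1

theorem isHolomorphic_F01 : IsHolomorphic 𝓕.F01 := 𝓕.isHolomorphic₂_F.apply_right 1

theorem F01_zero : 𝓕.F01 0 = 1 := by simp [F01, 𝓕.F_comm 0 1, 𝓕.F_modw]

theorem hasSubst_F : HasSubst (toMvPowerSeries 𝓕.F) := by
  refine HasSubst.of_constantCoeff_zero ?_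
  rw [← MvPowerSeries.coeff_zero_eq_constantCoeff_apply]
  simp [𝓕.F_modw]

theorem comp2_F01 : comp2 𝓕.F01 𝓕.F = mulS2 (inW 𝓕.F01) (d01 𝓕.F) := by
  funext a b
  calc comp2 𝓕.F01 𝓕.F a b
    _ = comp2 (𝓕.F a) 𝓕.F b 1 := 𝓕.F_assoc a b 1
    _ = mulS 𝓕.F01 (fderiv1 (𝓕.F a)) b :=
      comp2_apply_one (𝓕.isHolomorphic₂_F.apply_left a) 𝓕.isHolomorphic₂_F 𝓕.F_modw b
    _ = mulS2 (inW 𝓕.F01) (d01 𝓕.F) a b := by rw [mulS2_inW]; rfl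

theorem toPowerSeries_F01_subst :
    (toPowerSeries 𝓕.F01).subst (toMvPowerSeries 𝓕.F) =
      (toPowerSeries 𝓕.F01).subst (MvPowerSeries.X 1 : MvPowerSeries (Fin 2) R) *
        pderiv R 1 (toMvPowerSeries 𝓕.F) := by
  have hF := 𝓕.isHolomorphic₂_F
  rw [← toMvPowerSeries_comp2 hF 𝓕.hasSubst_F, comp2_F01,
    toMvPowerSeries_mulS2 𝓕.isHolomorphic_F01.inW hF.d01, toMvPowerSeries_inW, toMvPowerSeries_d01]

theorem isUnit_toPowerSeries_F01 : IsUnit (toPowerSeries 𝓕.F01) := by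
  rw [PowerSeries.isUnit_iff_constantCoeff, ← PowerSeries.coeff_zero_eq_constantCoeff_apply]
  simp [𝓕.F01_zero]

variable {𝓕} {φ ψ : ℤ → R}

theorem isLogarithm_iff : 𝓕.IsLogarithm φ ↔
    IsHolomorphic φ ∧ φ 0 = 0 ∧ φ 1 = 1 ∧ comp2 φ 𝓕.F = inZ φ + inW φ := by
  simp only [funext_iff]
  rfl

theorem IsLogarithm.mulS_fderiv1 (hφ : 𝓕.IsLogarithm φ) :
    mulS 𝓕.F01 (fderiv1 φ) = oneS R := by
  obtain ⟨hhol, -, h1, hlog⟩ := isLogarithm_iff.mp hφ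
  funext a
  calc mulS 𝓕.F01 (fderiv1 φ) a
    _ = comp2 φ 𝓕.F a 1 := (comp2_apply_one hhol 𝓕.isHolomorphic₂_F 𝓕.F_modw a).symm
    _ = inZ φ a 1 + inW φ a 1 := by rw [hlog]; rfl
    _ = oneS R a := by simp [inZ, inW, oneS, h1]

theorem IsLogarithm.toPowerSeries_mul_derivative (hφ : 𝓕.IsLogarithm φ) :
    toPowerSeries 𝓕.F01 * derivative R (toPowerSeries φ) = 1 := by
  have hhol := (isLogarithm_iff.mp hφ).1
  rw [← toPowerSeries_fderiv1,
    ← toPowerSeries_mulS 𝓕.isHolomorphic_F01 hhol.fderiv1, hφ.mulS_fderiv1,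
    toPowerSeries_oneS]

theorem IsLogarithm.unique [IsAddTorsionFree R] (hφ : 𝓕.IsLogarithm φ) (hψ : 𝓕.IsLogarithm ψ) :
    φ = ψ := by
  have hderiv : derivative R (toPowerSeries φ) = derivative R (toPowerSeries ψ) :=
    𝓕.isUnit_toPowerSeries_F01.mul_left_cancel
      (hφ.toPowerSeries_mul_derivative.trans hψ.toPowerSeries_mul_derivative.symm)
  obtain ⟨hφhol, hφ0, -, -⟩ := isLogarithm_iff.mp hφ
  obtain ⟨hψhol, hψ0, -, -⟩ := isLogarithm_iff.mp hψ
  refine hφhol.eq_of_toPowerSeries_eq hψhol (PowerSeries.derivative.ext hderiv ?_)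
  simp [← PowerSeries.coeff_zero_eq_constantCoeff_apply, hφ0, hψ0]

theorem pderiv_subst_F_of_mul_derivative {P : PowerSeries R}
    (hP : toPowerSeries 𝓕.F01 * derivative R P = 1) :
    pderiv R 1 (P.subst (toMvPowerSeries 𝓕.F)) =
      (derivative R P).subst (MvPowerSeries.X 1 : MvPowerSeries (Fin 2) R) := by
  have subst_mul_eq_one {s : MvPowerSeries (Fin 2) R} (hs : HasSubst s) :
      (toPowerSeries 𝓕.F01).subst s * (derivative R P).subst s = 1 := by
    rw [← PowerSeries.subst_mul hs, hP, ← PowerSeries.coe_substAlgHom hs, map_one]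
  have hF := subst_mul_eq_one 𝓕.hasSubst_F
  rw [toPowerSeries_F01_subst] at hF
  rw [pderiv_powerSeries_subst 𝓕.hasSubst_F]
  exact left_inv_eq_right_inv (by rw [← hF]; ring) (subst_mul_eq_one (HasSubst.X 1))

theorem comp2_eq_of_mul_derivative [IsAddTorsionFree R] (hhol : IsHolomorphic φ) (h0 : φ 0 = 0)
    (hφ : toPowerSeries 𝓕.F01 * derivative R (toPowerSeries φ) = 1) :
    comp2 φ 𝓕.F = inZ φ + inW φ := by
  have hF := 𝓕.isHolomorphic₂_F
  refine (hF.comp2 φ).eq_of_toMvPowerSeries_eq (hhol.inZ.add hhol.inW) (eq_of_pderiv_eq 1 ?_ ?_)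
  · rw [toMvPowerSeries_comp2 hF 𝓕.hasSubst_F, pderiv_subst_F_of_mul_derivative hφ,
      toMvPowerSeries_add, toMvPowerSeries_inZ, toMvPowerSeries_inW, map_add,
      pderiv_powerSeries_subst (HasSubst.X 0), pderiv_powerSeries_subst (HasSubst.X 1)]
    simp [MvPowerSeries.pderiv_X_of_ne]
  · intro d hd
    simp [hd, comp2_apply_zero hhol hF 𝓕.F_modw, inZ, inW, h0]

theorem isLogarithm_of_mul_derivative [IsAddTorsionFree R] (hhol : IsHolomorphic φ)
    (h0 : φ 0 = 0)
    (hφ : toPowerSeries 𝓕.F01 * derivative R (toPowerSeries φ) = 1) :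
    𝓕.IsLogarithm φ := by
  refine isLogarithm_iff.mpr ⟨hhol, h0, ?_, comp2_eq_of_mul_derivative hhol h0 hφ⟩
  simpa [PowerSeries.coeff_mul, PowerSeries.coeff_derivative, 𝓕.F01_zero] using
    congr(PowerSeries.coeff 0 $hφ)

variable (𝓕) in
theorem exists_isLogarithm [Algebra ℚ R] : ∃ φ, 𝓕.IsLogarithm φ := by
  have : IsAddTorsionFree R := IsAddTorsionFree.of_module_rat R
  obtain ⟨q, hq⟩ := 𝓕.isUnit_toPowerSeries_F01.exists_right_inv
  obtain ⟨P, hP0, hP⟩ := exists_derivative_eq q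
  obtain ⟨φ, hhol, rfl⟩ := exists_toPowerSeries_eq P
  refine ⟨φ, isLogarithm_of_mul_derivative hhol ?_ (by rw [hP, hq])⟩
  simpa [← PowerSeries.coeff_zero_eq_constantCoeff_apply] using hP0

end FormalGroupLaw

/-- over a `ℚ`-algebra `R`, every formal group law has a unique logarithm
`φ` (`φ(F(z,w)) = φ(z)+φ(w)`, `φ(0)=0`, `φ'(0)=1`), and `φ'(z) = F^{0,1}(z,0)⁻¹`
(expressed by `φ'(z)·F^{0,1}(z,0) = 1`). -/
theorem existence_logarithm (R : Type*) [CommRing R] [Algebra ℚ R]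
    (𝓕 : FormalGroupLaw R) :
    (∃! φ : ℤ → R, 𝓕.IsLogarithm φ) ∧
    (∀ φ : ℤ → R, 𝓕.IsLogarithm φ →
      mulS (fun i => 𝓕.F i 1) (fderiv1 φ) = oneS R) := by
  have : IsAddTorsionFree R := IsAddTorsionFree.of_module_rat R
  obtain ⟨φ, hφ⟩ := 𝓕.exists_isLogarithm
  exact ⟨⟨φ, hφ, fun ψ hψ => hψ.unique hφ⟩, fun ψ hψ => hψ.mulS_fderiv1⟩
end
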